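/- arXiv:1506.05349 — 6 statements merged into one kernel-verified Lean document; each statement's English description precedes it below -/
import Mathlib

section
/- Let n be a positive integer and let M be a real 2n×2n matrix in the split orthogonal group O(n,n), i.e. Mᵀ η M = η. If det(M₁₁) > 0 and det(M₂₂) > 0 (that is, M lies in the identity component O⁺⁺(n,n)), then det(I + M) ≥ 0. -/
open Matrix

/-- The metric `η = diag(I_n, -I_n)` as a `2n × 2n` real matrix. -/
noncomputable def splitMetric (n : ℕ) : Matrix (Fin n ⊕ Fin n) (Fin n ⊕ Fin n) ℝ :=
  Matrix.fromBlocks 1 0 0 (-1)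

/-!
Write `y = M x`. Preserving the form means `|y₁|² - |y₂|² = |x₁|² - |x₂|²`, that is
`|y₁|² + |x₂|² = |x₁|² + |y₂|²`. Hence the maps `R x = (y₁, x₂)` and `T x = (x₁, y₂)` satisfy
`Rᵀ R = Tᵀ T`, while `R + T = 1 + M` and `det R = det M₁₁ > 0`. Since `|R x| = |T x|` and `R` is
invertible, `R x = -t T x` is impossible for `0 ≤ t < 1` and `x ≠ 0`, so `det (R + t T)` cannot
change sign on the way from `det R` at `t = 0` to `det (1 + M)` at `t = 1`.
-/

variable {m n K : Type*} [Fintype m] [DecidableEq m] [Fintype n] [DecidableEq n]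

theorem det_add_smul_ne_zero_of_transpose_mul_self_eq
    [CommRing K] [LinearOrder K] [IsStrictOrderedRing K] {R T : Matrix m m K} {t : K}
    (hRT : Rᵀ * R = Tᵀ * T) (hR : R.det ≠ 0) (ht : t ^ 2 ≠ 1) : (R + t • T).det ≠ 0 := by
  intro hdet
  obtain ⟨x, hx, hker⟩ := exists_mulVec_eq_zero_iff.mpr hdet
  have hRx : R *ᵥ x = -(t • T *ᵥ x) := by
    rwa [add_mulVec, smul_mulVec, add_eq_zero_iff_eq_neg] at hker
  have hnorm : (R *ᵥ x) ⬝ᵥ (R *ᵥ x) = (T *ᵥ x) ⬝ᵥ (T *ᵥ x) := by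
    simp only [dotProduct_mulVec, vecMul_mulVec, hRT]
  have hscaled : (R *ᵥ x) ⬝ᵥ (R *ᵥ x) = t ^ 2 * ((R *ᵥ x) ⬝ᵥ (R *ᵥ x)) := by
    calc (R *ᵥ x) ⬝ᵥ (R *ᵥ x) = t ^ 2 * ((T *ᵥ x) ⬝ᵥ (T *ᵥ x)) := by
          rw [hRx, neg_dotProduct_neg, smul_dotProduct, dotProduct_smul, smul_eq_mul, smul_eq_mul,
            ← mul_assoc, sq]
      _ = t ^ 2 * ((R *ᵥ x) ⬝ᵥ (R *ᵥ x)) := by rw [hnorm]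
  have hRx_zero : R *ᵥ x = 0 :=
    dotProduct_self_eq_zero.mp (eq_zero_of_mul_eq_self_left ht hscaled.symm)
  exact hR (exists_mulVec_eq_zero_iff.mp ⟨x, hx, hRx_zero⟩)

theorem det_mul_det_add_nonneg_of_transpose_mul_self_eq {R T : Matrix m m ℝ}
    (hRT : Rᵀ * R = Tᵀ * T) : 0 ≤ R.det * (R + T).det := by
  rcases eq_or_ne R.det 0 with hR | hR
  · rw [hR, zero_mul]
  let f : ℝ → ℝ := fun t => R.det * (R + t • T).det
  have hf : Continuous f := by fun_prop
  have hf_zero : 0 ≤ f 0 := by simpa [f] using mul_self_nonneg R.det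
  have hf_one : f 1 = R.det * (R + T).det := by simp [f]
  by_contra! hneg
  obtain ⟨t, ht, hft⟩ := intermediate_value_Icc' zero_le_one hf.continuousOn
    (show (0 : ℝ) ∈ Set.Icc (f 1) (f 0) from ⟨hf_one ▸ hneg.le, hf_zero⟩)
  have ht_ne : t ≠ 1 := by
    rintro rfl
    exact hneg.ne (hf_one ▸ hft)
  have ht_sq : t ^ 2 ≠ 1 := (pow_lt_one₀ ht.1 (ht.2.lt_of_ne ht_ne) two_ne_zero).ne
  exact mul_ne_zero hR (det_add_smul_ne_zero_of_transpose_mul_self_eq hRT hR ht_sq) hft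

theorem transpose_mul_self_fromBlocks_eq_of_preserves_form [CommRing K]
    {A : Matrix m m K} {B : Matrix m n K} {C : Matrix n m K} {D : Matrix n n K}
    (h : (fromBlocks A B C D)ᵀ * fromBlocks 1 0 0 (-1) * fromBlocks A B C D =
      fromBlocks 1 0 0 (-1)) :
    (fromBlocks A B 0 1)ᵀ * fromBlocks A B 0 1 = (fromBlocks 1 0 C D)ᵀ * fromBlocks 1 0 C D := by
  simp only [fromBlocks_transpose, fromBlocks_multiply, fromBlocks_inj, transpose_zero,
    transpose_one, Matrix.mul_one, Matrix.mul_zero, Matrix.mul_neg, Matrix.neg_mul,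
    add_zero, zero_add] at h ⊢
  obtain ⟨h₁₁, h₁₂, h₂₁, h₂₂⟩ := h
  refine ⟨?_, ?_, ?_, ?_⟩
  · linear_combination (norm := abel) h₁₁
  · linear_combination (norm := abel) h₁₂
  · linear_combination (norm := abel) h₂₁
  · linear_combination (norm := abel) h₂₂

theorem det_one_add_nonneg_of_mem_Opp_general {M : Matrix (m ⊕ n) (m ⊕ n) ℝ}
    (hM : Mᵀ * fromBlocks 1 0 0 (-1) * M = fromBlocks 1 0 0 (-1))
    (h11 : 0 < M.toBlocks₁₁.det) : 0 ≤ (1 + M).det := by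
  obtain ⟨A, B, C, D, rfl⟩ : ∃ A B C D, M = fromBlocks A B C D :=
    ⟨_, _, _, _, (fromBlocks_toBlocks M).symm⟩
  have hdet : (fromBlocks A B 0 (1 : Matrix n n ℝ)).det = A.det := by
    rw [det_fromBlocks_zero₂₁, det_one, mul_one]
  have hadd : fromBlocks A B 0 1 + fromBlocks 1 0 C D = 1 + fromBlocks A B C D := by
    simp only [← fromBlocks_one, fromBlocks_add, add_zero, zero_add, add_comm A]
  have hnonneg := det_mul_det_add_nonneg_of_transpose_mul_self_eq
    (transpose_mul_self_fromBlocks_eq_of_preserves_form hM)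
  rw [hdet, hadd] at hnonneg
  exact nonneg_of_mul_nonneg_right hnonneg h11

theorem det_one_add_nonneg_of_mem_Opp (n : ℕ) (hn : 0 < n)
    (M : Matrix (Fin n ⊕ Fin n) (Fin n ⊕ Fin n) ℝ)
    (hM : Mᵀ * splitMetric n * M = splitMetric n)
    (h11 : 0 < M.toBlocks₁₁.det) (h22 : 0 < M.toBlocks₂₂.det) :
    0 ≤ (1 + M).det :=
  det_one_add_nonneg_of_mem_Opp_general hM h11
end

section
/- Let n be a positive integer and let M be a real 2n×2n matrix in the split orthogonal group O(n,n), i.e. Mᵀ η M = η. If det(M₁₁) < 0 and det(M₂₂) < 0 (that is, M lies in the component O⁻⁻(n,n)), then det(I + M) ≤ 0. -/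
open Matrix

/-!
Write `M = [A, B; C, D]`. Splitting off the rows of the identity differently, `1 + M = L + K` with
`L = [A, B; 0, 1]` and `K = [1, 0; C, D]`, and `M` preserves `diag(1, -1)` exactly when
`Lᵀ L = Kᵀ K`. Then `X = Lᵀ (L + K)` has symmetric part `(L + K)ᵀ (L + K) / 2`, which is positive
semidefinite, so `(1 - t) + t X` is nonsingular for `0 ≤ t < 1`, and by continuity
`det X = det A * det (1 + M)` is nonnegative.
-/

section SymmetricPart

variable {ι : Type*} [Fintype ι] [DecidableEq ι]

theorem det_ne_zero_of_posDef_add_conjTranspose {R : Type*} [CommRing R] [IsDomain R]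
    [PartialOrder R] [StarRing R] {X : Matrix ι ι R} (hX : (X + Xᴴ).PosDef) : X.det ≠ 0 := by
  intro hdet
  obtain ⟨v, hv, hXv⟩ := exists_mulVec_eq_zero_iff.mpr hdet
  have hform : star v ⬝ᵥ (X + Xᴴ) *ᵥ v = 0 := by
    rw [add_mulVec, hXv, zero_add, dotProduct_mulVec, ← star_mulVec, hXv, star_zero,
      zero_dotProduct]
  exact (hX.dotProduct_mulVec_pos hv).ne' hform

theorem det_nonneg_of_posSemidef_add_transpose {X : Matrix ι ι ℝ}
    (hX : (X + Xᵀ).PosSemidef) : 0 ≤ X.det := by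
  let Y : ℝ → Matrix ι ι ℝ := fun t => (1 - t) • 1 + t • X
  have hY_symm (t : ℝ) : Y t + (Y t)ᴴ = (2 * (1 - t)) • 1 + t • (X + Xᵀ) := by
    simp only [Y, conjTranspose_eq_transpose_of_trivial, transpose_add, transpose_smul,
      transpose_one]
    module
  have hY_det {t : ℝ} (ht₀ : 0 ≤ t) (ht₁ : t < 1) : (Y t).det ≠ 0 := by
    apply det_ne_zero_of_posDef_add_conjTranspose
    rw [hY_symm]
    exact (PosDef.one.smul (by linarith)).add_posSemidef (hX.smul ht₀)
  have hY_cont : Continuous fun t => (Y t).det := by fun_prop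
  by_contra! hneg
  obtain ⟨t, ⟨ht₀, ht₁⟩, ht⟩ : (0 : ℝ) ∈ (fun t => (Y t).det) '' Set.Ioo 0 1 :=
    intermediate_value_Ioo' zero_le_one hY_cont.continuousOn (by simpa [Y] using hneg)
  exact hY_det ht₀.le ht₁ ht

theorem det_mul_det_add_nonneg_of_transpose_mul_self_eq_s1 {L K : Matrix ι ι ℝ}
    (h : Lᵀ * L = Kᵀ * K) : 0 ≤ L.det * (L + K).det := by
  have hsymm : Lᵀ * (L + K) + (Lᵀ * (L + K))ᵀ = (L + K)ᴴ * (L + K) := by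
    calc Lᵀ * (L + K) + (Lᵀ * (L + K))ᵀ
        = Lᵀ * L + Lᵀ * K + Kᵀ * L + Lᵀ * L := by
          simp only [transpose_mul, transpose_add, transpose_transpose]
          noncomm_ring
      _ = Lᵀ * L + Lᵀ * K + Kᵀ * L + Kᵀ * K := by rw [h]
      _ = (L + K)ᴴ * (L + K) := by
          rw [conjTranspose_eq_transpose_of_trivial, transpose_add]
          noncomm_ring
  have hpos : (Lᵀ * (L + K) + (Lᵀ * (L + K))ᵀ).PosSemidef :=
    hsymm ▸ posSemidef_conjTranspose_mul_self (L + K)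
  simpa only [det_mul, det_transpose] using det_nonneg_of_posSemidef_add_transpose hpos

end SymmetricPart

section IndefiniteOrthogonal

variable {m n : Type*} [Fintype m] [Fintype n] [DecidableEq m] [DecidableEq n]

theorem transpose_mul_fromBlocks_sub_transpose_mul_fromBlocks {R : Type*} [Ring R]
    (A : Matrix m m R) (B : Matrix m n R) (C : Matrix n m R) (D : Matrix n n R) :
    (fromBlocks A B 0 1)ᵀ * fromBlocks A B 0 1 - (fromBlocks 1 0 C D)ᵀ * fromBlocks 1 0 C D =
      (fromBlocks A B C D)ᵀ * fromBlocks 1 0 0 (-1) * fromBlocks A B C D -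
        fromBlocks 1 0 0 (-1) := by
  simp only [fromBlocks_transpose, fromBlocks_multiply, sub_eq_add_neg, fromBlocks_neg,
    fromBlocks_add, transpose_one, transpose_zero, Matrix.mul_one, Matrix.mul_zero,
    Matrix.mul_neg, Matrix.neg_mul, add_zero, zero_add, neg_zero, neg_add]
  congr 1 <;> abel

theorem det_toBlocks₁₁_mul_det_one_add_nonneg {M : Matrix (m ⊕ n) (m ⊕ n) ℝ}
    (hM : Mᵀ * fromBlocks 1 0 0 (-1) * M = fromBlocks 1 0 0 (-1)) :
    0 ≤ M.toBlocks₁₁.det * (1 + M).det := by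
  obtain ⟨A, B, C, D, rfl⟩ : ∃ A B C D, M = fromBlocks A B C D :=
    ⟨_, _, _, _, (fromBlocks_toBlocks M).symm⟩
  have hgram : (fromBlocks A B 0 1)ᵀ * fromBlocks A B 0 1 =
      (fromBlocks 1 0 C D)ᵀ * fromBlocks 1 0 C D := by
    rw [← sub_eq_zero, transpose_mul_fromBlocks_sub_transpose_mul_fromBlocks, hM, sub_self]
  have hadd : fromBlocks A B 0 1 + fromBlocks 1 0 C D = 1 + fromBlocks A B C D := by
    simp only [← fromBlocks_one, fromBlocks_add, zero_add, add_zero, add_comm A]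
  have hdet : (fromBlocks A B 0 (1 : Matrix n n ℝ)).det = A.det := by
    rw [det_fromBlocks_zero₂₁, det_one, mul_one]
  simpa only [hadd, hdet, toBlocks_fromBlocks₁₁] using
    det_mul_det_add_nonneg_of_transpose_mul_self_eq_s1 hgram

theorem det_one_add_nonpos_of_mem_Omm_general {M : Matrix (m ⊕ n) (m ⊕ n) ℝ}
    (hM : Mᵀ * fromBlocks 1 0 0 (-1) * M = fromBlocks 1 0 0 (-1))
    (h11 : M.toBlocks₁₁.det < 0) : (1 + M).det ≤ 0 :=
  nonpos_of_mul_nonneg_right (det_toBlocks₁₁_mul_det_one_add_nonneg hM) h11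

end IndefiniteOrthogonal

theorem det_one_add_nonpos_of_mem_Omm (n : ℕ) (hn : 0 < n)
    (M : Matrix (Fin n ⊕ Fin n) (Fin n ⊕ Fin n) ℝ)
    (hM : Mᵀ * splitMetric n * M = splitMetric n)
    (h11 : M.toBlocks₁₁.det < 0) (h22 : M.toBlocks₂₂.det < 0) :
    (1 + M).det ≤ 0 :=
  det_one_add_nonpos_of_mem_Omm_general hM h11
end

section
/- Let n be a positive integer and let M be a real 2n×2n matrix in the split orthogonal group O(n,n), i.e. Mᵀ η M = η. If det(M₁₁) · det(M₂₂) < 0 (that is, M lies in one of the two mixed components O⁺⁻(n,n) or O⁻⁺(n,n)), then det(I + M) = 0. -/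
/-!
If `M` preserves a form `J`, then `Mᵀ * J * (1 + M) = (1 + M)ᵀ * J`, so for nondegenerate `J`
determinants give `det M * det (1 + M) = det (1 + M)`. If `J` is moreover block diagonal, replacing
the lower block row of `Mᵀ` by `(0, 1)` makes the product with `J * M` block lower triangular,
whence `det M₁₁ * det M = det M₂₂`. Hence `det M₁₁ * det (1 + M) = det M₂₂ * det (1 + M)`, and
`1 + M` is singular as soon as the two diagonal blocks have different determinants.
-/

open Matrix

section CommRing

variable {R m p q : Type*} [CommRing R] [Fintype m] [DecidableEq m] [Fintype p] [DecidableEq p]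
  [Fintype q] [DecidableEq q]

theorem det_mul_det_one_add_of_transpose_mul_mul_eq {J M : Matrix m m R}
    (hJ : IsLeftRegular J.det) (hM : Mᵀ * J * M = J) :
    M.det * (1 + M).det = (1 + M).det := by
  have intertwine : Mᵀ * J * (1 + M) = (1 + M)ᵀ * J := by
    rw [mul_add, hM, transpose_add, transpose_one, add_mul, mul_one, one_mul, add_comm]
  have hdet := congrArg det intertwine
  simp only [det_mul, det_transpose] at hdet
  apply hJ
  linear_combination hdet

theorem det_toBlocks₁₁_mul_det_of_transpose_mul_mul_eq {J₁ : Matrix p p R} {J₂ : Matrix q q R}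
    {M : Matrix (p ⊕ q) (p ⊕ q) R} (hJ : IsLeftRegular (fromBlocks J₁ 0 0 J₂).det)
    (hM : Mᵀ * fromBlocks J₁ 0 0 J₂ * M = fromBlocks J₁ 0 0 J₂) :
    M.toBlocks₁₁.det * M.det = M.toBlocks₂₂.det := by
  obtain ⟨A, B, C, D, rfl⟩ : ∃ A B C D, M = fromBlocks A B C D :=
    ⟨_, _, _, _, (fromBlocks_toBlocks M).symm⟩
  have triangular : fromBlocks Aᵀ Cᵀ 0 1 * fromBlocks J₁ 0 0 J₂ * fromBlocks A B C D =
      fromBlocks J₁ 0 (J₂ * C) (J₂ * D) := by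
    simp only [fromBlocks_transpose, fromBlocks_multiply, fromBlocks_inj] at hM ⊢
    exact ⟨hM.1, hM.2.1, by simp, by simp⟩
  have hdet := congrArg det triangular
  simp only [det_mul, det_fromBlocks_zero₂₁, det_fromBlocks_zero₁₂, det_transpose, det_one,
    mul_one] at hdet
  apply hJ
  simp only [toBlocks_fromBlocks₁₁, toBlocks_fromBlocks₂₂, det_fromBlocks_zero₂₁]
  linear_combination hdet

theorem det_toBlocks₁₁_mul_det_one_add_of_transpose_mul_mul_eq {J₁ : Matrix p p R}
    {J₂ : Matrix q q R} {M : Matrix (p ⊕ q) (p ⊕ q) R}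
    (hJ : IsLeftRegular (fromBlocks J₁ 0 0 J₂).det)
    (hM : Mᵀ * fromBlocks J₁ 0 0 J₂ * M = fromBlocks J₁ 0 0 J₂) :
    M.toBlocks₁₁.det * (1 + M).det = M.toBlocks₂₂.det * (1 + M).det :=
  calc
    M.toBlocks₁₁.det * (1 + M).det = M.toBlocks₁₁.det * (M.det * (1 + M).det) := by
      rw [det_mul_det_one_add_of_transpose_mul_mul_eq hJ hM]
    _ = M.toBlocks₂₂.det * (1 + M).det := by
      rw [← mul_assoc, det_toBlocks₁₁_mul_det_of_transpose_mul_mul_eq hJ hM]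

theorem det_one_add_eq_zero_of_mixed_general [NoZeroDivisors R] {J₁ : Matrix p p R}
    {J₂ : Matrix q q R} {M : Matrix (p ⊕ q) (p ⊕ q) R} (hJ : (fromBlocks J₁ 0 0 J₂).det ≠ 0)
    (hM : Mᵀ * fromBlocks J₁ 0 0 J₂ * M = fromBlocks J₁ 0 0 J₂)
    (hne : M.toBlocks₁₁.det ≠ M.toBlocks₂₂.det) :
    (1 + M).det = 0 := by
  by_contra hdet
  exact hne <| mul_right_cancel₀ hdet <|
    det_toBlocks₁₁_mul_det_one_add_of_transpose_mul_mul_eq (IsRegular.of_ne_zero' hJ).left hM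

end CommRing

theorem det_splitMetric_ne_zero (n : ℕ) : (splitMetric n).det ≠ 0 := by
  simp [splitMetric, det_neg]

theorem det_one_add_eq_zero_of_mixed (n : ℕ) (hn : 0 < n)
    (M : Matrix (Fin n ⊕ Fin n) (Fin n ⊕ Fin n) ℝ)
    (hM : Mᵀ * splitMetric n * M = splitMetric n)
    (hmixed : M.toBlocks₁₁.det * M.toBlocks₂₂.det < 0) :
    (1 + M).det = 0 :=
  det_one_add_eq_zero_of_mixed_general (det_splitMetric_ne_zero n) hM fun heq =>
    hmixed.not_ge (heq ▸ mul_self_nonneg _)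
end

section
/- Let n be a positive integer and let M be a real 2n×2n matrix in the split orthogonal group O(n,n), i.e. Mᵀ η M = η. Then |det(M₁₁)| ≥ 1 and |det(M₂₂)| ≥ 1; in particular both block determinants are nonzero. -/
open Matrix

/-!
The diagonal blocks of `Mᴴ η M = η` read `M₁₁ᴴ M₁₁ = 1 + M₂₁ᴴ M₂₁` and
`M₂₂ᴴ M₂₂ = 1 + M₁₂ᴴ M₁₂`. Both right-hand sides are at least `1` in the Loewner order, so all
their eigenvalues are at least `1`, and hence so are their determinants `|det M₁₁|²` and
`|det M₂₂|²`.
-/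

open LieAlgebra.Orthogonal (indefiniteDiagonal)

section IndefiniteDiagonal

variable (p q R : Type*) [DecidableEq p] [DecidableEq q] [CommRing R]

theorem indefiniteDiagonal_eq_fromBlocks :
    indefiniteDiagonal p q R = fromBlocks 1 0 0 (-1) := by
  rw [indefiniteDiagonal, ← fromBlocks_diagonal, diagonal_one, ← diagonal_neg, diagonal_one]

variable {p q R} [Fintype p] [Fintype q] [StarRing R]

theorem conjTranspose_fromBlocks_mul_indefiniteDiagonal_mul_fromBlocks {r s : Type*}
    (A : Matrix p r R) (B : Matrix p s R) (C : Matrix q r R) (D : Matrix q s R) :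
    (fromBlocks A B C D)ᴴ * indefiniteDiagonal p q R * fromBlocks A B C D =
      fromBlocks (Aᴴ * A - Cᴴ * C) (Aᴴ * B - Cᴴ * D) (Bᴴ * A - Dᴴ * C) (Bᴴ * B - Dᴴ * D) := by
  simp [indefiniteDiagonal_eq_fromBlocks, fromBlocks_conjTranspose, fromBlocks_multiply,
    sub_eq_add_neg]

end IndefiniteDiagonal

theorem splitMetric_eq_indefiniteDiagonal (n : ℕ) :
    splitMetric n = indefiniteDiagonal (Fin n) (Fin n) ℝ :=
  (indefiniteDiagonal_eq_fromBlocks _ _ _).symm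

section Loewner

open scoped ComplexOrder MatrixOrder

variable {𝕜 m : Type*} [RCLike 𝕜] [Fintype m] [DecidableEq m]

theorem one_le_eigenvalues {A : Matrix m m 𝕜} (hA : A.IsHermitian) (h : 1 ≤ A) (i : m) :
    1 ≤ hA.eigenvalues i :=
  (CFC.one_le_iff (R := ℝ) A hA).mp h _ (hA.eigenvalues_mem_spectrum_real i)

theorem one_le_det {A : Matrix m m 𝕜} (h : 1 ≤ A) : 1 ≤ A.det := by
  have hA : A.IsHermitian := (zero_le_one.trans h).isSelfAdjoint
  rw [hA.det_eq_prod_eigenvalues]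
  exact Finset.one_le_prod fun i _ ↦ mod_cast one_le_eigenvalues hA h i

theorem one_le_norm_det_of_one_le_conjTranspose_mul_self {A : Matrix m m 𝕜}
    (h : 1 ≤ Aᴴ * A) : 1 ≤ ‖A.det‖ := by
  have hdet : (1 : 𝕜) ≤ (‖A.det‖ ^ 2 : ℝ) :=
    calc
      1 ≤ (Aᴴ * A).det := one_le_det h
      _ = (‖A.det‖ ^ 2 : ℝ) := by
        rw [det_mul, det_conjTranspose, RCLike.star_def, RCLike.conj_mul, RCLike.ofReal_pow]
  exact (one_le_sq_iff₀ (norm_nonneg _)).mp (mod_cast hdet)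

theorem one_le_norm_det_of_conjTranspose_mul_self_sub_eq_one {k : Type*} [Fintype k]
    {A : Matrix m m 𝕜} {C : Matrix k m 𝕜} (h : Aᴴ * A - Cᴴ * C = 1) : 1 ≤ ‖A.det‖ := by
  refine one_le_norm_det_of_one_le_conjTranspose_mul_self ?_
  calc
    1 = Aᴴ * A - Cᴴ * C := h.symm
    _ ≤ Aᴴ * A := sub_le_self _ (posSemidef_conjTranspose_mul_self C).nonneg

end Loewner

theorem one_le_abs_det_blocks_general {𝕜 p q : Type*} [RCLike 𝕜] [Fintype p] [DecidableEq p]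
    [Fintype q] [DecidableEq q] {M : Matrix (p ⊕ q) (p ⊕ q) 𝕜}
    (hM : Mᴴ * indefiniteDiagonal p q 𝕜 * M = indefiniteDiagonal p q 𝕜) :
    1 ≤ ‖M.toBlocks₁₁.det‖ ∧ 1 ≤ ‖M.toBlocks₂₂.det‖ := by
  rw [← fromBlocks_toBlocks M, conjTranspose_fromBlocks_mul_indefiniteDiagonal_mul_fromBlocks,
    indefiniteDiagonal_eq_fromBlocks, fromBlocks_inj] at hM
  obtain ⟨h₁₁, -, -, h₂₂⟩ := hM
  exact ⟨one_le_norm_det_of_conjTranspose_mul_self_sub_eq_one h₁₁,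
    one_le_norm_det_of_conjTranspose_mul_self_sub_eq_one (by rw [← neg_sub, h₂₂, neg_neg])⟩

theorem one_le_abs_det_blocks (n : ℕ) (hn : 0 < n)
    (M : Matrix (Fin n ⊕ Fin n) (Fin n ⊕ Fin n) ℝ)
    (hM : Mᵀ * splitMetric n * M = splitMetric n) :
    1 ≤ |M.toBlocks₁₁.det| ∧ 1 ≤ |M.toBlocks₂₂.det| := by
  rw [splitMetric_eq_indefiniteDiagonal, ← conjTranspose_eq_transpose_of_trivial] at hM
  exact one_le_abs_det_blocks_general hM
end

section
/- Let n be a positive integer, let i be an index in the first half and j an index in the second half of the index set Fin n ⊕ Fin n, and let D be the 2n×2n real diagonal matrix equal to the identity except that its (i,i) and (j,j) entries are −1. Then D lies in the split orthogonal group O(n,n) (Dᵀ η D = η), and det(D₁₁) = −1 and det(D₂₂) = −1, i.e. D lies in the component O⁻⁻(n,n). -/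
open Matrix

open LieAlgebra.Orthogonal (indefiniteDiagonal)

theorem transpose_diagonal_mul_diagonal_mul_diagonal {ι R : Type*} [Fintype ι] [DecidableEq ι]
    [CommSemiring R] {d : ι → R} (hd : ∀ x, d x * d x = 1) (e : ι → R) :
    (diagonal d)ᵀ * diagonal e * diagonal d = diagonal e := by
  rw [diagonal_transpose, diagonal_mul_diagonal, diagonal_mul_diagonal]
  congr 1
  funext x
  rw [mul_right_comm, hd, one_mul]

theorem det_diagonal_ite_eq {ι R : Type*} [Fintype ι] [DecidableEq ι] [CommRing R]
    (k : ι) (a : R) : (diagonal fun x => if x = k then a else 1).det = a := by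
  rw [det_diagonal, Fintype.prod_ite_eq']

theorem vertex_matrix_mem_Omm_general {p q R : Type*} [Fintype p] [Fintype q]
    [DecidableEq p] [DecidableEq q] [CommRing R] (i : p) (j : q) (D : Matrix (p ⊕ q) (p ⊕ q) R)
    (hD : D = diagonal fun x => if x = Sum.inl i ∨ x = Sum.inr j then -1 else 1) :
    Dᵀ * indefiniteDiagonal p q R * D = indefiniteDiagonal p q R ∧
      D.toBlocks₁₁.det = -1 ∧ D.toBlocks₂₂.det = -1 := by
  subst hD
  refine ⟨?isometry, ?det₁₁, ?det₂₂⟩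
  case isometry =>
    refine transpose_diagonal_mul_diagonal_mul_diagonal (fun x => ?_) _
    split_ifs <;> ring
  case det₁₁ =>
    simpa only [toBlocks₁₁_diagonal, Sum.inl.injEq, reduceCtorEq, or_false]
      using det_diagonal_ite_eq i (-1 : R)
  case det₂₂ =>
    simpa only [toBlocks₂₂_diagonal, Sum.inr.injEq, reduceCtorEq, false_or]
      using det_diagonal_ite_eq j (-1 : R)

theorem vertex_matrix_mem_Omm (n : ℕ) (hn : 0 < n) (i j : Fin n)
    (D : Matrix (Fin n ⊕ Fin n) (Fin n ⊕ Fin n) ℝ)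
    (hD : D = Matrix.diagonal fun x =>
      if x = Sum.inl i ∨ x = Sum.inr j then (-1 : ℝ) else 1) :
    Dᵀ * splitMetric n * D = splitMetric n ∧
      D.toBlocks₁₁.det = -1 ∧ D.toBlocks₂₂.det = -1 := by
  rw [splitMetric_eq_indefiniteDiagonal]
  exact vertex_matrix_mem_Omm_general i j D hD
end

section
/- Let n be a positive integer and let M and N be real 2n×2n matrices in the split orthogonal group O(n,n) that lie in the same component with definite block-determinant signs: either both satisfy det(M₁₁), det(M₂₂), det(N₁₁), det(N₂₂) > 0, or both satisfy det(M₁₁), det(M₂₂), det(N₁₁), det(N₂₂) < 0. Then det(I + M) · det(I + N) ≥ 0; that is, the two determinants have the same sign (or one of them vanishes). -/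
open Matrix

/-!
Write `M = [[A, B], [C, D]]`, `P = [[1, 0], [C, D]]` and `Q = [[A, B], [0, 1]]`. Then
`1 + M = P + Q`, `det P = det D`, and `Pᵀ P - Qᵀ Q = η - Mᵀ η M`. When the last matrix is positive
semidefinite, `‖Q v‖ ≤ ‖P v‖` for all `v`, so if `P` is invertible then so is `P + t Q` for
`0 ≤ t < 1`, and by continuity `det (P + Q)` is zero or has the sign of `det P`. For `M` in the
split orthogonal group the difference vanishes, so `det (1 + M)` is zero or has the sign of `det D`.
-/

section GramDomination

variable {ι κ : Type*} [Fintype ι] [Fintype κ]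

theorem mulVec_dotProduct_mulVec_le_of_posSemidef_gram_sub_gram {P Q : Matrix κ ι ℝ}
    (h : (Pᵀ * P - Qᵀ * Q).PosSemidef) (v : ι → ℝ) :
    Q *ᵥ v ⬝ᵥ Q *ᵥ v ≤ P *ᵥ v ⬝ᵥ P *ᵥ v := by
  have gram_form (R : Matrix κ ι ℝ) : v ⬝ᵥ (Rᵀ * R) *ᵥ v = R *ᵥ v ⬝ᵥ R *ᵥ v := by
    rw [← mulVec_mulVec, dotProduct_mulVec v, vecMul_transpose]
  simpa only [star_trivial, sub_mulVec, dotProduct_sub, gram_form, sub_nonneg] using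
    h.dotProduct_mulVec_nonneg v

variable [DecidableEq ι] {P Q : Matrix ι ι ℝ}

theorem det_add_smul_ne_zero_of_posSemidef_gram_sub_gram (h : (Pᵀ * P - Qᵀ * Q).PosSemidef)
    (hP : P.det ≠ 0) {t : ℝ} (ht : |t| < 1) : (P + t • Q).det ≠ 0 := by
  intro hdet
  obtain ⟨v, hv, hker⟩ := exists_mulVec_eq_zero_iff.mpr hdet
  have hPv : P *ᵥ v = -(t • Q *ᵥ v) :=
    eq_neg_of_add_eq_zero_left (by rwa [add_mulVec, smul_mulVec] at hker)
  have hscale : P *ᵥ v ⬝ᵥ P *ᵥ v = t ^ 2 * (Q *ᵥ v ⬝ᵥ Q *ᵥ v) := by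
    rw [hPv, neg_dotProduct_neg, smul_dotProduct, dotProduct_smul, smul_eq_mul, smul_eq_mul]
    ring
  have hle := mulVec_dotProduct_mulVec_le_of_posSemidef_gram_sub_gram h v
  have hQv : Q *ᵥ v ⬝ᵥ Q *ᵥ v = 0 := by
    have hnonneg : 0 ≤ Q *ᵥ v ⬝ᵥ Q *ᵥ v := dotProduct_self_star_nonneg _
    have ht2 : t ^ 2 < 1 := (sq_lt_one_iff_abs_lt_one t).mpr ht
    nlinarith
  have hPv_zero : P *ᵥ v = 0 := by
    rw [hPv, dotProduct_self_eq_zero.mp hQv, smul_zero, neg_zero]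
  exact hP (exists_mulVec_eq_zero_iff.mp ⟨v, hv, hPv_zero⟩)

theorem det_add_mul_det_nonneg_of_posSemidef_gram_sub_gram
    (h : (Pᵀ * P - Qᵀ * Q).PosSemidef) : 0 ≤ (P + Q).det * P.det := by
  by_contra! hneg
  have hP : P.det ≠ 0 := right_ne_zero_of_mul hneg.ne
  let f (t : ℝ) : ℝ := (P + t • Q).det * P.det
  have hf : Continuous f := by fun_prop
  have hf₀ : 0 < f 0 := by simpa [f] using mul_self_pos.mpr hP
  have hf₁ : f 1 < 0 := by simpa [f] using hneg
  obtain ⟨t, ⟨ht₀, ht₁⟩, hft⟩ :=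
    intermediate_value_Ioo' zero_le_one hf.continuousOn ⟨hf₁, hf₀⟩
  have hdet : (P + t • Q).det ≠ 0 := det_add_smul_ne_zero_of_posSemidef_gram_sub_gram h hP
    (abs_lt.mpr ⟨neg_one_lt_zero.trans ht₀, ht₁⟩)
  exact mul_ne_zero hdet hP hft

end GramDomination

section BlockMatrices

variable {m n : Type*} [Fintype m] [Fintype n] [DecidableEq m] [DecidableEq n]

theorem gram_fromBlocks_sub_gram_fromBlocks {R : Type*} [NonAssocRing R] (A : Matrix m m R)
    (B : Matrix m n R) (C : Matrix n m R) (D : Matrix n n R) :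
    (fromBlocks 1 0 C D)ᵀ * fromBlocks 1 0 C D - (fromBlocks A B 0 1)ᵀ * fromBlocks A B 0 1 =
      fromBlocks 1 0 0 (-1) -
        (fromBlocks A B C D)ᵀ * fromBlocks 1 0 0 (-1) * fromBlocks A B C D := by
  simp only [fromBlocks_transpose, fromBlocks_multiply, sub_eq_add_neg, fromBlocks_neg,
    fromBlocks_add, transpose_zero, transpose_one, Matrix.mul_one, Matrix.mul_zero,
    Matrix.mul_neg, Matrix.neg_mul, add_zero, zero_add, fromBlocks_inj]
  refine ⟨?_, ?_, ?_, ?_⟩ <;> abel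

theorem det_one_add_mul_det_toBlocks₂₂_nonneg {M : Matrix (m ⊕ n) (m ⊕ n) ℝ}
    (hM : (fromBlocks 1 0 0 (-1) - Mᵀ * fromBlocks 1 0 0 (-1) * M).PosSemidef) :
    0 ≤ (1 + M).det * M.toBlocks₂₂.det := by
  obtain ⟨A, B, C, D, rfl⟩ : ∃ A B C D, M = fromBlocks A B C D :=
    ⟨_, _, _, _, (fromBlocks_toBlocks M).symm⟩
  rw [← gram_fromBlocks_sub_gram_fromBlocks] at hM
  have hsum : fromBlocks 1 0 C D + fromBlocks A B 0 1 = 1 + fromBlocks A B C D := by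
    simp only [← fromBlocks_one, fromBlocks_add, add_zero, add_comm]
  have hdet : (fromBlocks (1 : Matrix m m ℝ) 0 C D).det = D.det := by
    rw [det_fromBlocks_zero₁₂, det_one, one_mul]
  simpa only [hsum, hdet, toBlocks_fromBlocks₂₂] using
    det_add_mul_det_nonneg_of_posSemidef_gram_sub_gram hM

theorem det_one_add_same_sign_of_same_component_general {M N : Matrix (m ⊕ n) (m ⊕ n) ℝ}
    (hM : (fromBlocks 1 0 0 (-1) - Mᵀ * fromBlocks 1 0 0 (-1) * M).PosSemidef)
    (hN : (fromBlocks 1 0 0 (-1) - Nᵀ * fromBlocks 1 0 0 (-1) * N).PosSemidef)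
    (hMN : 0 < M.toBlocks₂₂.det * N.toBlocks₂₂.det) :
    0 ≤ (1 + M).det * (1 + N).det := by
  refine nonneg_of_mul_nonneg_left ?_ hMN
  calc 0 ≤ ((1 + M).det * M.toBlocks₂₂.det) * ((1 + N).det * N.toBlocks₂₂.det) :=
        mul_nonneg (det_one_add_mul_det_toBlocks₂₂_nonneg hM)
          (det_one_add_mul_det_toBlocks₂₂_nonneg hN)
    _ = (1 + M).det * (1 + N).det * (M.toBlocks₂₂.det * N.toBlocks₂₂.det) :=
        mul_mul_mul_comm _ _ _ _

end BlockMatrices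

theorem det_one_add_same_sign_of_same_component (n : ℕ) (hn : 0 < n)
    (M N : Matrix (Fin n ⊕ Fin n) (Fin n ⊕ Fin n) ℝ)
    (hM : Mᵀ * splitMetric n * M = splitMetric n)
    (hN : Nᵀ * splitMetric n * N = splitMetric n)
    (hsame : (0 < M.toBlocks₁₁.det ∧ 0 < M.toBlocks₂₂.det ∧
        0 < N.toBlocks₁₁.det ∧ 0 < N.toBlocks₂₂.det) ∨
      (M.toBlocks₁₁.det < 0 ∧ M.toBlocks₂₂.det < 0 ∧
        N.toBlocks₁₁.det < 0 ∧ N.toBlocks₂₂.det < 0)) :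
    0 ≤ (1 + M).det * (1 + N).det := by
  have hMN : 0 < M.toBlocks₂₂.det * N.toBlocks₂₂.det :=
    mul_pos_iff.mpr (hsame.imp (fun h => ⟨h.2.1, h.2.2.2⟩) fun h => ⟨h.2.1, h.2.2.2⟩)
  exact det_one_add_same_sign_of_same_component_general
    (sub_eq_zero_of_eq hM.symm ▸ .zero) (sub_eq_zero_of_eq hN.symm ▸ .zero) hMN
end
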